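/- For every Greedy-Commit process (i.e., for every choice of maximum-weight matching in each round), every online algorithm ALG, and all nonnegative round weights w_1, …, w_T, the expected reward of Greedy-Commit is at least 0.43 times the expected reward of ALG. -/

import Mathlib

open Finset

/-- A finite simple graph presented via an abstract edge type: each edge has a
set of exactly two endpoints, and distinct edges have distinct endpoint sets. -/
structure GraphEdges (V E : Type) where
  ends : E → Finset V
  card_ends : ∀ e, (ends e).card = 2
  ends_injective : Function.Injective ends

variable {V E : Type}

/-- A matching: a set of pairwise endpoint-disjoint edges. -/
def GraphEdges.IsMatching (G : GraphEdges V E) (M : Finset E) : Prop :=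
  ∀ e ∈ M, ∀ f ∈ M, e ≠ f → Disjoint (G.ends e) (G.ends f)

/-- `select` is an online algorithm: under each realization `ω` it selects a
matching in every round, and its round-`t` selection depends only on its own
selections in earlier rounds and on the realized values of the edges it
selected in those rounds. -/
def GraphEdges.IsOnline (G : GraphEdges V E) (select : (E → Bool) → ℕ → Finset E) : Prop :=
  (∀ ω t, G.IsMatching (select ω t)) ∧
  (∀ ω ω' t, (∀ s, s < t → ∀ e ∈ select ω s, ω' e = ω e) → select ω' t = select ω t)

/-- Probability of the sample graph `ω` under independent Bernoulli edges. -/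
def probOf [Fintype E] (p : E → ℝ) (ω : E → Bool) : ℝ :=
  ∏ e : E, if ω e then p e else 1 - p e

/-- Expected reward of an algorithm: the `w`-weighted expected number of
successful selected edges over rounds `0, …, T-1`. -/
noncomputable def expectedReward [Fintype E] [DecidableEq E] (p : E → ℝ) (w : ℕ → ℝ)
    (T : ℕ) (select : (E → Bool) → ℕ → Finset E) : ℝ :=
  ∑ ω : E → Bool, probOf p ω *
    ∑ t ∈ Finset.range T, w t * ((select ω t).filter (fun e => ω e)).card

/-- Edges selected by `select` in rounds before `t` under realization `ω`. -/
def selectedBefore [DecidableEq E] (select : (E → Bool) → ℕ → Finset E)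
    (ω : E → Bool) (t : ℕ) : Finset E :=
  (Finset.range t).biUnion (select ω)

/-- `select` is a Greedy-Commit process: an online algorithm which in each
round keeps all previously selected successful edges `A`, and augments them
with a matching, among edges having no endpoint covered by `A`, of maximum
total weight where previously revealed unsuccessful edges have weight `0` and
all other edges `e` have weight `p e`. -/
def GraphEdges.IsGreedyCommit [DecidableEq E] (G : GraphEdges V E) (p : E → ℝ)
    (select : (E → Bool) → ℕ → Finset E) : Prop :=
  G.IsOnline select ∧
  ∀ ω t,
    ∃ M : Finset E,
      G.IsMatching M ∧
      (∀ e ∈ M, ∀ a ∈ (selectedBefore select ω t).filter (fun e => ω e),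
        Disjoint (G.ends e) (G.ends a)) ∧
      (∀ M' : Finset E, G.IsMatching M' →
        (∀ e ∈ M', ∀ a ∈ (selectedBefore select ω t).filter (fun e => ω e),
          Disjoint (G.ends e) (G.ends a)) →
        ∑ e ∈ M', (if e ∈ (selectedBefore select ω t).filter (fun e => ¬ ω e) then 0 else p e)
          ≤ ∑ e ∈ M, (if e ∈ (selectedBefore select ω t).filter (fun e => ¬ ω e) then 0 else p e)) ∧
      select ω t = (selectedBefore select ω t).filter (fun e => ω e) ∪ M

theorem probOf_nonneg' [Fintype E] (p : E → ℝ) (hp : ∀ e, 0 ≤ p e ∧ p e ≤ 1) (ω : E → Bool) :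
    0 ≤ probOf p ω := by
  unfold probOf
  refine Finset.prod_nonneg fun e _ => ?_
  split_ifs
  · exact (hp e).1
  · linarith [(hp e).2]

/-- Independence: if `f` does not depend on coordinate `e`. -/
theorem indep_coord [Fintype E] [DecidableEq E] (p : E → ℝ) (e : E) (f : (E → Bool) → ℝ)
    (hf : ∀ ω b, f (Function.update ω e b) = f ω) :
    ∑ ω : E → Bool, probOf p ω * (if ω e then f ω else 0)
      = ∑ ω : E → Bool, probOf p ω * (p e * f ω) := by
  classical
  -- the flip involution
  let flip : (E → Bool) → (E → Bool) := fun ω => Function.update ω e (!(ω e))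
  have hflip : Function.Involutive flip := by
    intro ω
    funext x
    by_cases hx : x = e
    · subst hx; simp [flip]
    · simp [flip, hx]
  let q : (E → Bool) → ℝ := fun ω => ∏ x ∈ univ.erase e, if ω x then p x else 1 - p x
  have hq : ∀ ω, probOf p ω = (if ω e then p e else 1 - p e) * q ω := by
    intro ω
    simp only [probOf, q]
    rw [← Finset.mul_prod_erase univ _ (mem_univ e)]
  have hqf : ∀ ω, q (flip ω) = q ω := by
    intro ω
    refine Finset.prod_congr rfl fun x hx => ?_
    have : x ≠ e := (Finset.mem_erase.mp hx).1
    simp [flip, this]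
  have hff : ∀ ω, f (flip ω) = f ω := fun ω => hf ω _
  have hfe : ∀ ω, flip ω e = !(ω e) := by intro ω; simp [flip]
  have key : ∀ g : (E → Bool) → ℝ, ∑ ω, g (flip ω) = ∑ ω, g ω := fun g =>
    Equiv.sum_comp hflip.toPerm g
  have h2 : ∀ g : (E → Bool) → ℝ, 2 * ∑ ω, g ω = ∑ ω, (g ω + g (flip ω)) := by
    intro g
    rw [Finset.sum_add_distrib, key]; ring
  have : 2 * ∑ ω : E → Bool, probOf p ω * (if ω e then f ω else 0)
      = 2 * ∑ ω : E → Bool, probOf p ω * (p e * f ω) := by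
    rw [h2, h2]
    refine Finset.sum_congr rfl fun ω _ => ?_
    simp only [hq, hqf, hff, hfe]
    cases ω e <;> simp <;> ring
  linarith

/-- Summed version of independence for a random set of edges. -/
theorem indep_set [Fintype E] [DecidableEq E] (p : E → ℝ) (N : (E → Bool) → Finset E)
    (hN : ∀ ω e b, e ∈ N ω → e ∈ N (Function.update ω e b)) :
    ∑ ω : E → Bool, probOf p ω * (((N ω).filter (fun e => ω e)).card : ℝ)
      = ∑ ω : E → Bool, probOf p ω * ∑ e ∈ N ω, p e := by
  have h1 : ∀ ω : E → Bool, (((N ω).filter (fun e => ω e)).card : ℝ)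
      = ∑ e : E, if ω e then (if e ∈ N ω then (1:ℝ) else 0) else 0 := by
    intro ω
    rw [Finset.card_filter]
    push_cast
    rw [← Finset.sum_filter_add_sum_filter_not univ (fun e => e ∈ N ω)]
    rw [Finset.sum_eq_zero (s := univ.filter (fun e => ¬ e ∈ N ω))]
    · rw [add_zero]
      have : univ.filter (fun e => e ∈ N ω) = N ω := by ext; simp
      rw [this]
      refine Finset.sum_congr rfl fun e he => ?_
      simp [he]
    · intro e he
      simp at he
      simp [he]
  have h2 : ∀ ω : E → Bool, ∑ e ∈ N ω, p e = ∑ e : E, p e * (if e ∈ N ω then (1:ℝ) else 0) := by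
    intro ω
    simp
  simp only [h1, h2, Finset.mul_sum]
  rw [Finset.sum_comm, Finset.sum_comm (s := univ (α := E → Bool))]
  refine Finset.sum_congr rfl fun e _ => ?_
  refine indep_coord p e (fun ω => if e ∈ N ω then (1:ℝ) else 0) ?_
  intro ω b
  have : e ∈ N (Function.update ω e b) ↔ e ∈ N ω := by
    constructor
    · intro h
      have := hN _ e (ω e) h
      simpa using this
    · exact hN ω e b
  simp [this]

/-- Changing an edge not yet revealed does not change the selections. -/
theorem online_update [DecidableEq E] {G : GraphEdges V E} {sel : (E → Bool) → ℕ → Finset E}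
    (h : G.IsOnline sel) (ω : E → Bool) (t : ℕ) (e : E) (b : Bool)
    (he : e ∉ selectedBefore sel ω t) (s : ℕ) (hs : s ≤ t) :
    sel (Function.update ω e b) s = sel ω s := by
  refine h.2 ω _ s fun r hr x hx => ?_
  have : x ≠ e := by
    rintro rfl
    exact he (Finset.mem_biUnion.mpr ⟨r, Finset.mem_range.mpr (by omega), hx⟩)
  simp [this]

theorem before_update [DecidableEq E] {G : GraphEdges V E} {sel : (E → Bool) → ℕ → Finset E}
    (h : G.IsOnline sel) (ω : E → Bool) (t : ℕ) (e : E) (b : Bool)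
    (he : e ∉ selectedBefore sel ω t) :
    selectedBefore sel (Function.update ω e b) t = selectedBefore sel ω t := by
  unfold selectedBefore
  refine Finset.biUnion_congr rfl fun s hs => ?_
  exact online_update h ω t e b he s (Finset.mem_range.mp hs).le

/-- The set of successes found in rounds before `t`. -/
def succBefore [DecidableEq E] (sel : (E → Bool) → ℕ → Finset E)
    (ω : E → Bool) (t : ℕ) : Finset E :=
  (selectedBefore sel ω t).filter (fun e => ω e)

theorem succ_update [DecidableEq E] {G : GraphEdges V E} {sel : (E → Bool) → ℕ → Finset E}
    (h : G.IsOnline sel) (ω : E → Bool) (t : ℕ) (e : E) (b : Bool)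
    (he : e ∉ selectedBefore sel ω t) :
    succBefore sel (Function.update ω e b) t = succBefore sel ω t := by
  unfold succBefore
  rw [before_update h ω t e b he]
  refine Finset.filter_congr fun x hx => ?_
  have : x ≠ e := by rintro rfl; exact he hx
  simp [this]

/-- Edges of a matching that touch `A` number at most `2 |A|`. -/
theorem touch_card [DecidableEq V] [DecidableEq E] (G : GraphEdges V E) (M A : Finset E)
    (hM : G.IsMatching M) (hA : ∀ e ∈ M, ∃ a ∈ A, ¬ Disjoint (G.ends e) (G.ends a)) :
    M.card ≤ 2 * A.card := by
  classical
  have h : ∀ e, e ∈ M → ∃ v, v ∈ G.ends e ∧ v ∈ A.biUnion G.ends := by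
    intro e he
    obtain ⟨a, ha, hd⟩ := hA e he
    obtain ⟨v, hv, hv'⟩ := Finset.not_disjoint_iff.mp hd
    exact ⟨v, hv, Finset.mem_biUnion.mpr ⟨a, ha, hv'⟩⟩
  have hc : M.card ≤ (A.biUnion G.ends).card := by
    rw [← Finset.card_attach]
    refine Finset.card_le_card_of_injOn (fun e => (h e.1 e.2).choose)
      (fun e _ => (h e.1 e.2).choose_spec.2) ?_
    intro e _ f _ hef
    by_contra hne
    have hd := hM e.1 e.2 f.1 f.2 (fun h' => hne (Subtype.ext h'))
    have h1 := (h e.1 e.2).choose_spec.1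
    have h2 := (h f.1 f.2).choose_spec.1
    simp only at hef
    rw [← hef] at h2
    exact (Finset.disjoint_left.mp hd) h1 h2
  refine hc.trans ?_
  refine Finset.card_biUnion_le.trans ?_
  simp [G.card_ends, mul_comm]

theorem not_disjoint_self' (G : GraphEdges V E) (e : E) : ¬ Disjoint (G.ends e) (G.ends e) := by
  intro h
  have h0 : G.ends e = ∅ := by simpa using h
  have := G.card_ends e
  rw [h0] at this
  simp at this

/-- Edges newly selected by `alg` in round `s`, unrevealed by `gc` before round `t`, and
not touching the successes of `gc` before round `t`. -/
def newFree [DecidableEq V] [DecidableEq E] (G : GraphEdges V E)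
    (gc alg : (E → Bool) → ℕ → Finset E) (t s : ℕ) (ω : E → Bool) : Finset E :=
  (alg ω s).filter (fun e => e ∉ selectedBefore alg ω s ∧ e ∉ selectedBefore gc ω t ∧
    ∀ a ∈ succBefore gc ω t, Disjoint (G.ends e) (G.ends a))

theorem newFree_update [DecidableEq V] [DecidableEq E] (G : GraphEdges V E)
    (gc alg : (E → Bool) → ℕ → Finset E) (hgc : G.IsOnline gc) (halg : G.IsOnline alg) (t s : ℕ)
    (ω : E → Bool) (e : E) (b : Bool) (he : e ∈ newFree G gc alg t s ω) :
    e ∈ newFree G gc alg t s (Function.update ω e b) := by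
  unfold newFree at he ⊢
  rw [Finset.mem_filter] at he ⊢
  obtain ⟨h1, h2, h3, h4⟩ := he
  rw [online_update halg ω s e b h2 s le_rfl, before_update halg ω s e b h2,
    before_update hgc ω t e b h3, succ_update hgc ω t e b h3]
  exact ⟨h1, h2, h3, h4⟩

theorem alg_card_le [DecidableEq V] [DecidableEq E] (G : GraphEdges V E)
    (gc alg : (E → Bool) → ℕ → Finset E) (halg : G.IsOnline alg) (t τ : ℕ) (ω : E → Bool) :
    ((alg ω τ).filter (fun e => ω e)).card ≤ 2 * (succBefore gc ω t).card +
      ∑ s ∈ range (τ + 1), ((newFree G gc alg t s ω).filter (fun e => ω e)).card := by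
  classical
  set S := (alg ω τ).filter (fun e => ω e) with hS
  rw [← Finset.card_filter_add_card_filter_not
    (fun e => ∃ a ∈ succBefore gc ω t, ¬ Disjoint (G.ends e) (G.ends a))]
  refine add_le_add ?_ ?_
  · refine touch_card G _ _ ?_ ?_
    · intro e he f hf hne
      simp only [hS, Finset.mem_filter] at he hf
      exact halg.1 ω τ e he.1.1 f hf.1.1 hne
    · intro e he
      exact (Finset.mem_filter.mp he).2
  · refine le_trans (Finset.card_le_card ?_) (Finset.card_biUnion_le)
    intro e he
    simp only [hS, Finset.mem_filter] at he
    obtain ⟨⟨h1, h2⟩, h3⟩ := he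
    push Not at h3
    have hex : ∃ s, e ∈ alg ω s := ⟨τ, h1⟩
    refine Finset.mem_biUnion.mpr ⟨Nat.find hex, ?_, ?_⟩
    · exact Finset.mem_range.mpr (Nat.lt_succ_of_le (Nat.find_min' hex h1))
    · refine Finset.mem_filter.mpr ⟨Finset.mem_filter.mpr ⟨Nat.find_spec hex, ?_, ?_, h3⟩, h2⟩
      · intro hb
        obtain ⟨r, hr, hr'⟩ := Finset.mem_biUnion.mp hb
        exact Nat.find_min hex (Finset.mem_range.mp hr) hr'
      · intro hb
        exact not_disjoint_self' G e (h3 e (Finset.mem_filter.mpr ⟨hb, h2⟩))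

theorem newFree_weight_le [DecidableEq V] [DecidableEq E] (G : GraphEdges V E) (p : E → ℝ)
    (hp : ∀ e, 0 ≤ p e ∧ p e ≤ 1)
    (gc alg : (E → Bool) → ℕ → Finset E) (hgc : G.IsGreedyCommit p gc) (halg : G.IsOnline alg)
    (t s : ℕ) (ω : E → Bool) :
    ∑ e ∈ newFree G gc alg t s ω, p e ≤ ∑ e ∈ gc ω t \ selectedBefore gc ω t, p e := by
  obtain ⟨M, hM, hMd, hmax, hsel⟩ := hgc.2 ω t
  have h := hmax (newFree G gc alg t s ω) ?_ ?_
  · have hl : ∑ e ∈ newFree G gc alg t s ω,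
        (if e ∈ (selectedBefore gc ω t).filter (fun e => ¬ ω e) then 0 else p e)
        = ∑ e ∈ newFree G gc alg t s ω, p e := by
      refine Finset.sum_congr rfl fun e he => ?_
      have := (Finset.mem_filter.mp he).2.2.1
      rw [if_neg]
      intro h'
      exact this (Finset.mem_filter.mp h').1
    rw [hl] at h
    refine h.trans ?_
    have hr : ∑ e ∈ M, (if e ∈ (selectedBefore gc ω t).filter (fun e => ¬ ω e) then 0 else p e)
        = ∑ e ∈ M.filter (fun e => ¬ e ∈ (selectedBefore gc ω t).filter (fun e => ¬ ω e)), p e := by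
      rw [Finset.sum_filter]
      refine Finset.sum_congr rfl fun e _ => ?_
      split_ifs <;> simp_all
    rw [hr]
    refine Finset.sum_le_sum_of_subset_of_nonneg ?_ (fun e _ _ => (hp e).1)
    intro e he
    obtain ⟨h1, h2⟩ := Finset.mem_filter.mp he
    refine Finset.mem_sdiff.mpr ⟨?_, ?_⟩
    · rw [hsel]; exact Finset.mem_union_right _ h1
    · intro hb
      by_cases hω : ω e
      · exact not_disjoint_self' G e (hMd e h1 e (Finset.mem_filter.mpr ⟨hb, hω⟩))
      · exact h2 (Finset.mem_filter.mpr ⟨hb, hω⟩)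
  · intro e he f hf hne
    exact halg.1 ω s e (Finset.mem_filter.mp he).1 f (Finset.mem_filter.mp hf).1 hne
  · intro e he
    exact (Finset.mem_filter.mp he).2.2.2

theorem succ_card_step [DecidableEq E] (gc : (E → Bool) → ℕ → Finset E) (t : ℕ) (ω : E → Bool) :
    ((succBefore gc ω (t + 1)).card : ℝ) = (succBefore gc ω t).card +
      ((gc ω t \ selectedBefore gc ω t).filter (fun e => ω e)).card := by
  have hU : succBefore gc ω (t + 1) = succBefore gc ω t ∪
      (gc ω t \ selectedBefore gc ω t).filter (fun e => ω e) := by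
    ext e
    simp only [succBefore, selectedBefore, Finset.range_add_one, Finset.biUnion_insert,
      Finset.mem_filter, Finset.mem_union, Finset.mem_sdiff]
    tauto
  rw [hU, Finset.card_union_of_disjoint]
  · push_cast; rfl
  · rw [Finset.disjoint_left]
    intro e he he'
    simp only [succBefore, Finset.mem_filter, Finset.mem_sdiff] at he he'
    exact he'.1.2 he.1

theorem gc_round [DecidableEq E] (G : GraphEdges V E) (p : E → ℝ)
    (gc : (E → Bool) → ℕ → Finset E) (hgc : G.IsGreedyCommit p gc) (t : ℕ) (ω : E → Bool) :
    (gc ω t).filter (fun e => ω e) = succBefore gc ω (t + 1) := by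
  obtain ⟨M, hM, hMd, hmax, hsel⟩ := hgc.2 ω t
  ext e
  have : e ∈ gc ω t ↔ e ∈ (selectedBefore gc ω t).filter (fun e => ω e) ∪ M := by rw [hsel]
  simp only [succBefore, selectedBefore, Finset.range_add_one, Finset.biUnion_insert,
      Finset.mem_filter, Finset.mem_union] at this ⊢
  tauto

/-- The recursion for the expected number of successes. -/
theorem gc_step [DecidableEq V] [Fintype E] [DecidableEq E] (G : GraphEdges V E) (p : E → ℝ)
    (hp : ∀ e, 0 ≤ p e ∧ p e ≤ 1)
    (gc alg : (E → Bool) → ℕ → Finset E) (hgc : G.IsGreedyCommit p gc) (halg : G.IsOnline alg)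
    (t τ : ℕ) :
    ∑ ω, probOf p ω * (((alg ω τ).filter (fun e => ω e)).card : ℝ) ≤
      2 * ∑ ω, probOf p ω * ((succBefore gc ω t).card : ℝ) +
      (τ + 1 : ℝ) * (∑ ω, probOf p ω * ((succBefore gc ω (t + 1)).card : ℝ)
        - ∑ ω, probOf p ω * ((succBefore gc ω t).card : ℝ)) := by
  have hgain : ∑ ω, probOf p ω * ((succBefore gc ω (t + 1)).card : ℝ)
        - ∑ ω, probOf p ω * ((succBefore gc ω t).card : ℝ)
      = ∑ ω, probOf p ω * ∑ e ∈ gc ω t \ selectedBefore gc ω t, p e := by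
    rw [← indep_set p (fun ω => gc ω t \ selectedBefore gc ω t), ← Finset.sum_sub_distrib]
    · refine Finset.sum_congr rfl fun ω _ => ?_
      rw [succ_card_step]; ring
    · intro ω e b he
      obtain ⟨h1, h2⟩ := Finset.mem_sdiff.mp he
      rw [online_update hgc.1 ω t e b h2 t le_rfl, before_update hgc.1 ω t e b h2]
      exact he
  rw [hgain]
  calc ∑ ω, probOf p ω * (((alg ω τ).filter (fun e => ω e)).card : ℝ)
      ≤ ∑ ω, probOf p ω * (2 * ((succBefore gc ω t).card : ℝ) +
        ∑ s ∈ range (τ + 1), (((newFree G gc alg t s ω).filter (fun e => ω e)).card : ℝ)) := by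
        refine Finset.sum_le_sum fun ω _ => ?_
        refine mul_le_mul_of_nonneg_left ?_ (probOf_nonneg' p hp ω)
        exact_mod_cast alg_card_le G gc alg halg t τ ω
    _ = 2 * ∑ ω, probOf p ω * ((succBefore gc ω t).card : ℝ) +
        ∑ s ∈ range (τ + 1), ∑ ω, probOf p ω *
          (((newFree G gc alg t s ω).filter (fun e => ω e)).card : ℝ) := by
        rw [Finset.sum_comm, Finset.mul_sum, ← Finset.sum_add_distrib]
        refine Finset.sum_congr rfl fun ω _ => ?_
        rw [← Finset.mul_sum]; ring
    _ ≤ 2 * ∑ ω, probOf p ω * ((succBefore gc ω t).card : ℝ) +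
        ∑ s ∈ range (τ + 1), ∑ ω, probOf p ω * ∑ e ∈ gc ω t \ selectedBefore gc ω t, p e := by
        refine add_le_add le_rfl (Finset.sum_le_sum fun s _ => ?_)
        rw [indep_set p (newFree G gc alg t s)
          (fun ω e b he => newFree_update G gc alg hgc.1 halg t s ω e b he)]
        refine Finset.sum_le_sum fun ω _ => ?_
        exact mul_le_mul_of_nonneg_left (newFree_weight_le G p hp gc alg hgc halg t s ω)
          (probOf_nonneg' p hp ω)
    _ = _ := by
        rw [Finset.sum_const, Finset.card_range, nsmul_eq_mul]
        push_cast; rfl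

/-- Numerical consequence of the recursion. -/
theorem recursion_bound (g : ℕ → ℝ) (O : ℝ) (τ : ℕ) (hO : 0 ≤ O) (h0 : g 0 = 0)
    (h : ∀ t, O ≤ 2 * g t + (τ + 1 : ℝ) * (g (t + 1) - g t)) :
    0.43 * O ≤ g (τ + 1) := by
  rcases Nat.eq_zero_or_pos τ with rfl | hτ
  · have := h 0
    simp [h0] at this
    simp
    linarith
  have hτ' : (1 : ℝ) ≤ τ := by exact_mod_cast hτ
  set n : ℝ := (τ + 1 : ℝ) with hn
  have hn2 : 2 ≤ n := by linarith
  have hn0 : 0 < n := by linarith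
  have hc : 0 ≤ 1 - 2 / n := by
    have : 2 / n ≤ 1 := by rw [div_le_one hn0]; exact hn2
    linarith
  have hstep : ∀ t, O - 2 * g t ≤ (1 - 2 / n) ^ t * O := by
    intro t
    induction t with
    | zero => simp [h0]
    | succ k ih =>
      have hk := h k
      have h1 : O - 2 * g (k + 1) ≤ (1 - 2 / n) * (O - 2 * g k) := by
        have h2 : (O - 2 * g k) / n ≤ g (k + 1) - g k := by
          rw [div_le_iff₀ hn0]; linarith
        have h3 : (1 - 2 / n) * (O - 2 * g k) = (O - 2 * g k) - 2 * ((O - 2 * g k) / n) := by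
          field_simp
        rw [h3]; linarith
      calc _ ≤ _ := h1
        _ ≤ (1 - 2 / n) * ((1 - 2 / n) ^ k * O) := mul_le_mul_of_nonneg_left ih hc
        _ = _ := by ring
  have hfin := hstep (τ + 1)
  have hexp : (1 - 2 / n) ^ (τ + 1) ≤ 0.14 := by
    have h1 : 1 - 2 / n ≤ Real.exp (-(2 / n)) := by
      have := Real.add_one_le_exp (-(2 / n)); linarith
    calc (1 - 2 / n) ^ (τ + 1) ≤ Real.exp (-(2 / n)) ^ (τ + 1) := pow_le_pow_left₀ hc h1 _
      _ = Real.exp (-2) := by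
        rw [← Real.exp_nat_mul]
        congr 1
        push_cast
        rw [← hn]
        field_simp
      _ ≤ 0.14 := by
        have h2 : Real.exp (-2) = (Real.exp (-1)) ^ 2 := by
          rw [← Real.exp_nat_mul]; norm_num
        rw [h2]
        have h3 := Real.exp_neg_one_lt_d9
        have h4 := Real.exp_pos (-1)
        nlinarith
  have := mul_le_mul_of_nonneg_right hexp hO
  norm_num at this ⊢
  linarith

/-- Every Greedy-Commit process is a `0.43`-approximation to
every online algorithm, for any nonnegative round weights. -/
theorem greedyCommit_approximates_opt
    {V E : Type} [DecidableEq V] [Fintype E] [DecidableEq E]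
    (G : GraphEdges V E) (p : E → ℝ) (hp : ∀ e, 0 ≤ p e ∧ p e ≤ 1)
    (T : ℕ) (w : ℕ → ℝ) (hw : ∀ t, 0 ≤ w t)
    (gc alg : (E → Bool) → ℕ → Finset E)
    (hgc : G.IsGreedyCommit p gc) (halg : G.IsOnline alg) :
    0.43 * expectedReward p w T alg ≤ expectedReward p w T gc := by
  have hre : ∀ sel : (E → Bool) → ℕ → Finset E, expectedReward p w T sel =
      ∑ t ∈ range T, w t * ∑ ω, probOf p ω * (((sel ω t).filter (fun e => ω e)).card : ℝ) := by
    intro sel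
    unfold expectedReward
    simp only [Finset.mul_sum]
    rw [Finset.sum_comm]
    refine Finset.sum_congr rfl fun t _ => Finset.sum_congr rfl fun ω _ => ?_
    ring
  rw [hre, hre, Finset.mul_sum]
  refine Finset.sum_le_sum fun τ _ => ?_
  rw [mul_left_comm]
  refine mul_le_mul_of_nonneg_left ?_ (hw τ)
  simp only [gc_round G p gc hgc]
  refine recursion_bound (fun t => ∑ ω, probOf p ω * ((succBefore gc ω t).card : ℝ)) _ τ ?_ ?_ ?_
  · exact Finset.sum_nonneg fun ω _ => mul_nonneg (probOf_nonneg' p hp ω) (Nat.cast_nonneg _)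
  · simp [succBefore, selectedBefore]
  · intro t
    exact gc_step G p hp gc alg hgc halg t τ
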